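/- Let χ : S → ℂ be a multiplicative function (i.e. χ(xy) = χ(x)χ(y) for all x, y ∈ S) with Σ_{i∈I} c_i χ(z_i) ≠ 0 and Σ_{i∈I} c_i χ(τ(z_i)) = Σ_{i∈I} c_i χ(z_i). Then the function f(x) := ((χ(x) + χ(τ(x)))/2) · Σ_{i∈I} c_i χ(z_i) is a non-zero solution of the integral Kannappan equation. -/

import Mathlib

/-!
For multiplicative `χ`, the function `g = (χ + χ ∘ τ) / 2` solves d'Alembert's equation
`g (x * y) + g (x * τ y) = 2 * g x * g y`. If a linear functional `Λ` takes the same value `a` at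
`χ` and at `χ ∘ τ`, then applying `Λ` to the left translate `t ↦ g (w * t)` only multiplies `g w`
by `a`. Hence `a • g` solves the integral Kannappan equation: both of its sides are `a ^ 2` times
those of d'Alembert's equation. If `g = 0`, then `χ ∘ τ = -χ`, and comparing the values at `x * x`
gives `χ x ^ 2 = -(χ x ^ 2)`, so `χ = 0`, and then `a = 0`.
-/

section Kannappan

variable {S K : Type*} [Field K]

/-- The part of `h` that is even under the involution `τ`. For multiplicative `h` it is the basic
solution of d'Alembert's equation. -/
def evenPart (τ : S → S) (h : S → K) (x : S) : K :=
  (h x + h (τ x)) / 2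

/-- The integral Kannappan equation for `f`. Integration against `μ` is replaced by an arbitrary
linear functional `Λ` on the functions `S → K`. -/
def IsKannappanSolution [Mul S] (τ : S → S) (Λ : Module.Dual K (S → K)) (f : S → K) : Prop :=
  ∀ x y, Λ (fun t ↦ f (x * y * t)) + Λ (fun t ↦ f (x * τ y * t)) = 2 * f x * f y

/-- Integration against the combination of Dirac measures with weight `c i` at `z i` for `i ∈ I`,
as a linear functional. -/
def diracIntegral {ι : Type*} (I : Finset ι) (c : ι → K) (z : ι → S) : Module.Dual K (S → K) where
  toFun h := ∑ i ∈ I, c i * h (z i)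
  map_add' g h := by simp only [Pi.add_apply, mul_add, Finset.sum_add_distrib]
  map_smul' a h := by simp only [Pi.smul_apply, smul_eq_mul, mul_left_comm, Finset.mul_sum,
    RingHom.id_apply]

section Multiplicative

variable [Mul S] {τ : S → S} (hτmul : ∀ x y, τ (x * y) = τ y * τ x) (χ : S →ₙ* K)

include hτmul

theorem evenPart_mul_add_evenPart_mul_apply [NeZero (2 : K)] (hτ : Function.Involutive τ)
    (x y : S) :
    evenPart τ χ (x * y) + evenPart τ χ (x * τ y) = 2 * evenPart τ χ x * evenPart τ χ y := by
  simp only [evenPart, hτmul, hτ y, map_mul]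
  field [NeZero.ne (2 : K)]

theorem eq_zero_of_evenPart_eq_zero [NeZero (2 : K)] (h : evenPart τ χ = 0) : ⇑χ = 0 := by
  have map_apply_eq_neg (x : S) : χ (τ x) = -χ x := by
    have hx : (χ x + χ (τ x)) / 2 = 0 := congrFun h x
    rw [div_eq_zero_iff, or_iff_left (NeZero.ne (2 : K))] at hx
    exact eq_neg_of_add_eq_zero_right hx
  funext x
  have two_mul_sq : 2 * χ x ^ 2 = 0 := by
    have hxx := map_apply_eq_neg (x * x)
    rw [hτmul, map_mul, map_mul, map_apply_eq_neg] at hxx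
    linear_combination hxx
  simpa [NeZero.ne (2 : K)] using two_mul_sq

theorem dual_evenPart_mul_left {Λ : Module.Dual K (S → K)} (hΛ : Λ (χ ∘ τ) = Λ χ) (w : S) :
    Λ (fun t ↦ evenPart τ χ (w * t)) = evenPart τ χ w * Λ χ := by
  have translate_eq :
      (fun t ↦ evenPart τ χ (w * t)) = (χ w / 2) • ⇑χ + (χ (τ w) / 2) • (χ ∘ τ) := by
    funext t
    simp only [evenPart, hτmul, map_mul, Pi.add_apply, Pi.smul_apply, smul_eq_mul,
      Function.comp_apply]
    ring
  rw [translate_eq, map_add, map_smul, map_smul, hΛ, smul_eq_mul, smul_eq_mul, evenPart]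
  ring

theorem isKannappanSolution_smul_evenPart [NeZero (2 : K)] (hτ : Function.Involutive τ)
    {Λ : Module.Dual K (S → K)} (hΛ : Λ (χ ∘ τ) = Λ χ) :
    IsKannappanSolution τ Λ (Λ χ • evenPart τ χ) := by
  intro x y
  have dual_translate (w : S) :
      Λ (fun t ↦ (Λ χ • evenPart τ χ) (w * t)) = Λ χ ^ 2 * evenPart τ χ w := by
    change Λ (Λ χ • fun t ↦ evenPart τ χ (w * t)) = _
    rw [map_smul, dual_evenPart_mul_left hτmul χ hΛ, smul_eq_mul]
    ring
  calc Λ (fun t ↦ (Λ χ • evenPart τ χ) (x * y * t))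
        + Λ (fun t ↦ (Λ χ • evenPart τ χ) (x * τ y * t))
      = Λ χ ^ 2 * (evenPart τ χ (x * y) + evenPart τ χ (x * τ y)) := by
        rw [dual_translate, dual_translate, mul_add]
    _ = Λ χ ^ 2 * (2 * evenPart τ χ x * evenPart τ χ y) := by
        rw [evenPart_mul_add_evenPart_mul_apply hτmul χ hτ]
    _ = 2 * (Λ χ • evenPart τ χ) x * (Λ χ • evenPart τ χ) y := by
        simp only [Pi.smul_apply, smul_eq_mul]
        ring

theorem stmt_19_general [NeZero (2 : K)] (hτ : Function.Involutive τ)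
    {Λ : Module.Dual K (S → K)} (hΛχ : Λ χ ≠ 0) (hΛ : Λ (χ ∘ τ) = Λ χ) :
    Λ χ • evenPart τ χ ≠ 0 ∧ IsKannappanSolution τ Λ (Λ χ • evenPart τ χ) := by
  refine ⟨smul_ne_zero hΛχ fun h ↦ hΛχ ?_, isKannappanSolution_smul_evenPart hτmul χ hτ hΛ⟩
  rw [eq_zero_of_evenPart_eq_zero hτmul χ h, map_zero]

end Multiplicative

end Kannappan

theorem stmt_19 {S ι : Type*} [Semigroup S] (τ : S → S)
    (hτmul : ∀ x y : S, τ (x * y) = τ y * τ x)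
    (hτinv : ∀ x : S, τ (τ x) = x)
    (I : Finset ι) (c : ι → ℂ) (z : ι → S)
    (hz : ∀ i ∈ I, ∀ s : S, z i * s = s * z i)
    (χ : S → ℂ) (hχ : ∀ x y : S, χ (x * y) = χ x * χ y)
    (hχ1 : (∑ i ∈ I, c i * χ (z i)) ≠ 0)
    (hχ2 : (∑ i ∈ I, c i * χ (τ (z i))) = ∑ i ∈ I, c i * χ (z i))
    (f : S → ℂ)
    (hf : ∀ x : S, f x = ((χ x + χ (τ x)) / 2) * ∑ i ∈ I, c i * χ (z i)) :
    f ≠ 0 ∧ ∀ x y : S,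
      (∑ i ∈ I, c i * f (x * y * z i)) + (∑ i ∈ I, c i * f (x * τ y * z i))
        = 2 * f x * f y := by
  obtain rfl : f = diracIntegral I c z χ • evenPart τ χ :=
    funext fun x ↦ (hf x).trans (mul_comm _ _)
  exact stmt_19_general hτmul ⟨χ, hχ⟩ hτinv (Λ := diracIntegral I c z) hχ1 hχ2
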